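/- arXiv:2212.06802 — 4 statements merged into one kernel-verified Lean document; each statement's English description precedes it below -/
import Mathlib

section
/- Let r > s ≥ 1, m ≥ 1 and n ≥ 1 be integers such that n² · C(r, r−s) ≤ m^{r−s}, where C(r, r−s) denotes the binomial coefficient. Then there exist functions φ_1, …, φ_r : {1,…,n} → {1,…,m} such that for every pair of distinct u, v ∈ {1,…,n}, the number of indices i ∈ {1,…,r} with φ_i(u) ≠ φ_i(v) is at least s. -/
/-!
Gilbert's greedy argument. View `u ↦ (φ i u)_i` as a choice of `n` words of length `r` over an
alphabet of `m` letters. A maximal set of words at pairwise Hamming distance greater than `s` is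
such that the Hamming balls of radius `s` around its elements cover all `m ^ r` words. A ball has at
most `C(r, s) * m ^ s` elements, by a union bound over the sets of `s` coordinates outside which a
word agrees with the centre, so the maximal set has at least `m ^ (r - s) / C(r, s)` elements.
Unlike the first-moment bound over pairs, this costs a factor `n` rather than `n ^ 2`.
-/

open Finset

lemma exists_pairwise_not_and_card_le_mul {X : Type*} [Fintype X] {R : X → X → Prop}
    [DecidableRel R] (hrefl : ∀ x, R x x) (hsymm : ∀ x y, R x y → R y x) {B : ℕ}
    (hB : ∀ w, #{x | R x w} ≤ B) :
    ∃ C : Finset X, (C : Set X).Pairwise (fun x y ↦ ¬ R x y) ∧ Fintype.card X ≤ #C * B := by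
  classical
  obtain ⟨C, hC⟩ := (Set.toFinite
    {C : Finset X | (C : Set X).Pairwise fun x y ↦ ¬ R x y}).exists_maximal ⟨∅, by simp⟩
  have hcover : (univ : Finset X) ⊆ C.biUnion fun w ↦ {x | R x w} := by
    intro x _
    simp only [mem_biUnion, mem_filter_univ]
    by_contra! hx
    have hinsert : (insert x C : Set X).Pairwise fun x y ↦ ¬ R x y :=
      hC.prop.insert fun w hw _ ↦ ⟨hx w hw, fun h ↦ hx w hw (hsymm w x h)⟩
    have hxC : x ∈ C :=
      hC.le_of_ge (y := insert x C) (by simpa using hinsert) (subset_insert x C)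
        (mem_insert_self x C)
    exact hx x hxC (hrefl x)
  exact ⟨C, hC.prop, (card_le_card hcover).trans (card_biUnion_le_card_mul _ _ _ fun w _ ↦ hB w)⟩

section Hamming

variable {ι : Type*} [Fintype ι]

lemma card_filter_forall_notMem_eq {α : ι → Type*} [∀ i, Fintype (α i)] [∀ i, DecidableEq (α i)]
    [DecidableEq ι] (S : Finset ι) (w : ∀ i, α i) :
    #{x : ∀ i, α i | ∀ i ∉ S, x i = w i} = ∏ i ∈ S, Fintype.card (α i) := by
  have hbox : ({x : ∀ i, α i | ∀ i ∉ S, x i = w i} : Finset _) =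
      Fintype.piFinset fun i ↦ if i ∈ S then univ else {w i} := by
    ext x
    simp only [mem_filter_univ, Fintype.mem_piFinset]
    refine forall_congr' fun i ↦ ?_
    split_ifs with hi <;> simp [hi]
  simp only [hbox, Fintype.card_piFinset, apply_ite Finset.card, card_univ, card_singleton,
    Fintype.prod_ite_mem]

variable {α : Type*} [Fintype α] [DecidableEq α] {s : ℕ}

lemma card_filter_hammingDist_le [DecidableEq ι] (hs : s ≤ Fintype.card ι) (w : ι → α) :
    #{x | hammingDist x w ≤ s} ≤ (Fintype.card ι).choose s * Fintype.card α ^ s := by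
  have hcover : ({x | hammingDist x w ≤ s} : Finset (ι → α)) ⊆
      (powersetCard s univ).biUnion fun S ↦ {x | ∀ i ∉ S, x i = w i} := by
    intro x hx
    obtain ⟨S, hdiff, hS⟩ := exists_superset_card_eq (mem_filter_univ x |>.mp hx) hs
    simp only [mem_biUnion, mem_powersetCard_univ, mem_filter_univ]
    refine ⟨S, hS, fun i hi ↦ ?_⟩
    by_contra hne
    exact hi (hdiff (by simpa using hne))
  calc #{x | hammingDist x w ≤ s}
      ≤ #(powersetCard s (univ : Finset ι)) * Fintype.card α ^ s := by
        refine (card_le_card hcover).trans (card_biUnion_le_card_mul _ _ _ fun S hS ↦ ?_)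
        rw [card_filter_forall_notMem_eq, prod_const, mem_powersetCard_univ.mp hS]
    _ = (Fintype.card ι).choose s * Fintype.card α ^ s := by rw [card_powersetCard, card_univ]

lemma exists_pairwise_lt_hammingDist_and_pow_le [Nonempty α] (hs : s ≤ Fintype.card ι) :
    ∃ C : Finset (ι → α), (C : Set (ι → α)).Pairwise (fun x y ↦ s < hammingDist x y) ∧
      Fintype.card α ^ (Fintype.card ι - s) ≤ #C * (Fintype.card ι).choose s := by
  classical
  obtain ⟨C, hsep, hcard⟩ := exists_pairwise_not_and_card_le_mul
    (R := fun x y : ι → α ↦ hammingDist x y ≤ s) (by simp)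
    (fun x y h ↦ hammingDist_comm x y ▸ h) (card_filter_hammingDist_le hs)
  refine ⟨C, by simpa only [not_le] using hsep, ?_⟩
  refine Nat.le_of_mul_le_mul_right ?_ (pow_pos (Fintype.card_pos (α := α)) s)
  calc Fintype.card α ^ (Fintype.card ι - s) * Fintype.card α ^ s
      = Fintype.card (ι → α) := by rw [pow_sub_mul_pow _ hs, Fintype.card_fun]
    _ ≤ #C * (Fintype.card ι).choose s * Fintype.card α ^ s := by rwa [mul_assoc]

theorem exists_separating_functions_general {V : Type*} [Fintype V] [Nonempty α]
    (hs : s ≤ Fintype.card ι)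
    (hcount :
      Fintype.card V * (Fintype.card ι).choose s ≤ Fintype.card α ^ (Fintype.card ι - s)) :
    ∃ φ : ι → V → α, ∀ u v : V, u ≠ v → s < #{i | φ i u ≠ φ i v} := by
  obtain ⟨C, hsep, hC⟩ := exists_pairwise_lt_hammingDist_and_pow_le (α := α) hs
  have hle : Fintype.card V ≤ Fintype.card C := by
    rw [Fintype.card_coe]
    exact Nat.le_of_mul_le_mul_right (hcount.trans hC) (Nat.choose_pos hs)
  obtain ⟨word⟩ := Function.Embedding.nonempty_of_card_le hle
  exact ⟨fun i u ↦ (word u).1 i, fun u v huv ↦ hsep (word u).2 (word v).2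
    (Subtype.coe_injective.ne (word.injective.ne huv))⟩

end Hamming

theorem exists_separating_functions (r s m n : ℕ) (hsr : s < r) (hs : 1 ≤ s)
    (hm : 1 ≤ m) (hn : 1 ≤ n)
    (hcount : n ^ 2 * Nat.choose r (r - s) ≤ m ^ (r - s)) :
    ∃ φ : Fin r → Fin n → Fin m,
      ∀ u v : Fin n, u ≠ v →
        s ≤ (Finset.univ.filter fun i : Fin r => φ i u ≠ φ i v).card := by
  have : NeZero m := ⟨Nat.one_le_iff_ne_zero.mp hm⟩
  rw [Nat.choose_symm hsr.le] at hcount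
  have hlinear : n * r.choose s ≤ m ^ (r - s) :=
    (Nat.mul_le_mul_right _ (Nat.le_self_pow two_ne_zero n)).trans hcount
  obtain ⟨φ, hφ⟩ := exists_separating_functions_general (ι := Fin r) (V := Fin n) (α := Fin m)
    (s := s) (by simpa using hsr.le) (by simpa using hlinear)
  exact ⟨φ, fun u v huv ↦ (hφ u v huv).le⟩
end

section
/- Let k ≥ 2, t ≥ 1 and r ≥ 1 be integers, let ε > 0 be real, and let 0 < δ < 1/16. Let F be a graph with exactly k vertices and exactly t edges, and let Q_1, …, Q_r be subsets of V(F). Set L = ⌈log₂ k⌉, and for each j ∈ {1,…,L} define A_j = {v ∈ V(F) : k/2^j ≤ deg_F(v) < k/2^{j−1}}. Define s_j = Σ_{i=1}^r |A_j ∩ Q_i| and X = Σ_{i=1}^r Σ_{v ∈ Q_i} deg_F(v). If X ≥ ε·r·t/2, then there exists ℓ ∈ {1,…,L} such that s_ℓ > δ·ε·r·Σ_{j=1}^ℓ |A_j|. -/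
/-!
Cut the weights `w` into dyadic layers `A j`, on which `w ≈ M / 2 ^ j`, and suppose that no initial
block of layers is a bottleneck, so that `∑ i, #(A ℓ ∩ Q i) ≤ c * ∑ j ≤ ℓ, #(A j)` for all `ℓ`.
Bounding `w` on `A ℓ` by `M / 2 ^ (ℓ - 1)` and exchanging the sums over `j ≤ ℓ`, the geometric decay
charges every vertex of `A j` at most `c * 4 * M / 2 ^ j`, which is at most `4 * c` times its
weight. Hence the total weight of the `Q i` is at most `4 * c * ∑ v, w v`. For degrees and
`c = δ * ε * r` this bound is `8 * δ * ε * r * t`, which is below `ε * r * t / 2` when `δ < 1 / 16`.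
-/

open Finset Function

-- After exchanging the sums, `a j` has coefficient
-- `∑ l ∈ Icc j L, M / 2 ^ (l - 1) = 4 * M / 2 ^ j - 2 * M / 2 ^ L`.
theorem sum_div_two_pow_mul_sum_Icc {K : Type*} [Field K] [NeZero (2 : K)] (M : K) (a : ℕ → K)
    (L : ℕ) :
    ∑ l ∈ Icc 1 L, M / 2 ^ (l - 1) * ∑ j ∈ Icc 1 l, a j =
      4 * ∑ j ∈ Icc 1 L, M / 2 ^ j * a j - 2 * M / 2 ^ L * ∑ j ∈ Icc 1 L, a j := by
  induction L with
  | zero => simp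
  | succ n ih =>
    have h : 1 ≤ n + 1 := n.succ_pos
    simp only [sum_Icc_succ_top h, ih, Nat.add_sub_cancel]
    field_simp
    ring

section DyadicLayer

variable {V K : Type*} [Fintype V] [Field K] [LinearOrder K] {w : V → K} {M : K} {L : ℕ}

/-- The `j`-th dyadic layer of a weight function `w` below the scale `M`, numbered from `j = 1`.
Because `0 - 1 = 0` in `ℕ`, layer `0` is empty. -/
def dyadicLayer (w : V → K) (M : K) (j : ℕ) : Finset V :=
  {v | M / 2 ^ j ≤ w v ∧ w v < M / 2 ^ (j - 1)}

theorem mem_dyadicLayer {v : V} {j : ℕ} :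
    v ∈ dyadicLayer w M j ↔ M / 2 ^ j ≤ w v ∧ w v < M / 2 ^ (j - 1) := by
  simp [dyadicLayer]

theorem exists_mem_dyadicLayer {v : V} (hv : w v ∈ Set.Ico (M / 2 ^ L) M) :
    ∃ j ∈ Icc 1 L, v ∈ dyadicLayer w M j := by
  obtain ⟨hlow, hhigh⟩ := hv
  induction L with
  | zero => exact absurd hhigh (by simpa using hlow)
  | succ n ih =>
    rcases le_or_gt (M / 2 ^ n) (w v) with hn | hn
    · obtain ⟨j, hj, hvj⟩ := ih hn
      exact ⟨j, Icc_subset_Icc_right n.le_succ hj, hvj⟩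
    · exact ⟨n + 1, by simp, mem_dyadicLayer.2 ⟨hlow, hn⟩⟩

variable [IsStrictOrderedRing K]

theorem pairwise_disjoint_dyadicLayer (w : V → K) (hM : 0 ≤ M) :
    Pairwise (Disjoint on dyadicLayer w M) := by
  have hanti : Antitone fun j : ℕ => M / 2 ^ j := fun _ _ hij =>
    div_le_div_of_nonneg_left hM (by positivity) (pow_le_pow_right₀ one_le_two hij)
  intro i j hij
  refine disjoint_left.2 fun v hi hj => ?_
  exact Set.disjoint_left.1 (hanti.pairwise_disjoint_on_Ico_pred hij)
    (mem_dyadicLayer.1 hi) (mem_dyadicLayer.1 hj)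

theorem sum_eq_sum_dyadicLayer_inter [DecidableEq V] (hM : 0 ≤ M)
    (hw : ∀ v, w v = 0 ∨ w v ∈ Set.Ico (M / 2 ^ L) M) (Q : Finset V) :
    ∑ v ∈ Q, w v = ∑ l ∈ Icc 1 L, ∑ v ∈ dyadicLayer w M l ∩ Q, w v := by
  have hdisj : (Icc 1 L : Set ℕ).PairwiseDisjoint fun l => dyadicLayer w M l ∩ Q :=
    fun i _ j _ hij => (pairwise_disjoint_dyadicLayer w hM hij).mono inter_subset_left
      inter_subset_left
  rw [← sum_biUnion (by exact_mod_cast hdisj)]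
  refine (sum_subset (biUnion_subset.2 fun _ _ => inter_subset_right) fun v hvQ hv => ?_).symm
  refine (hw v).resolve_right fun hIco => hv ?_
  obtain ⟨l, hl, hvl⟩ := exists_mem_dyadicLayer hIco
  exact mem_biUnion.2 ⟨l, hl, mem_inter.2 ⟨hvl, hvQ⟩⟩

theorem sum_le_sum_mul_card_dyadicLayer_inter [DecidableEq V] (hM : 0 ≤ M)
    (hw : ∀ v, w v = 0 ∨ w v ∈ Set.Ico (M / 2 ^ L) M) (Q : Finset V) :
    ∑ v ∈ Q, w v ≤ ∑ l ∈ Icc 1 L, M / 2 ^ (l - 1) * (#(dyadicLayer w M l ∩ Q) : K) := by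
  rw [sum_eq_sum_dyadicLayer_inter hM hw Q]
  refine sum_le_sum fun l _ => ?_
  rw [mul_comm, ← nsmul_eq_mul]
  exact sum_le_card_nsmul _ _ _ fun v hv => (mem_dyadicLayer.1 (mem_inter.1 hv).1).2.le

theorem sum_mul_card_dyadicLayer_le_sum (hM : 0 ≤ M)
    (hw : ∀ v, w v = 0 ∨ w v ∈ Set.Ico (M / 2 ^ L) M) :
    ∑ l ∈ Icc 1 L, M / 2 ^ l * (#(dyadicLayer w M l) : K) ≤ ∑ v, w v := by
  classical
  rw [sum_eq_sum_dyadicLayer_inter hM hw univ]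
  simp only [inter_univ]
  refine sum_le_sum fun l _ => ?_
  rw [mul_comm, ← nsmul_eq_mul]
  exact card_nsmul_le_sum _ _ _ fun v hv => (mem_dyadicLayer.1 hv).1

theorem sum_mul_sum_card_dyadicLayer_le (hM : 0 ≤ M)
    (hw : ∀ v, w v = 0 ∨ w v ∈ Set.Ico (M / 2 ^ L) M) :
    ∑ l ∈ Icc 1 L, M / 2 ^ (l - 1) * ∑ j ∈ Icc 1 l, (#(dyadicLayer w M j) : K) ≤
      4 * ∑ v, w v := by
  have hlast : 0 ≤ 2 * M / 2 ^ L * ∑ j ∈ Icc 1 L, (#(dyadicLayer w M j) : K) := by positivity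
  rw [sum_div_two_pow_mul_sum_Icc]
  linarith [sum_mul_card_dyadicLayer_le_sum hM hw]

theorem bottleneck_event_general [DecidableEq V] {ι : Type*} [Fintype ι] (hM : 0 ≤ M)
    (hw : ∀ v, w v = 0 ∨ w v ∈ Set.Ico (M / 2 ^ L) M) (Q : ι → Finset V) {c : K} (hc : 0 ≤ c)
    (hX : 4 * c * ∑ v, w v < ∑ i, ∑ v ∈ Q i, w v) :
    ∃ ℓ ∈ Icc 1 L, c * ∑ j ∈ Icc 1 ℓ, (#(dyadicLayer w M j) : K) <
      ∑ i, (#(dyadicLayer w M ℓ ∩ Q i) : K) := by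
  by_contra! hsparse
  refine hX.not_ge ?_
  calc ∑ i, ∑ v ∈ Q i, w v
      ≤ ∑ i, ∑ l ∈ Icc 1 L, M / 2 ^ (l - 1) * (#(dyadicLayer w M l ∩ Q i) : K) :=
        sum_le_sum fun i _ => sum_le_sum_mul_card_dyadicLayer_inter hM hw (Q i)
    _ = ∑ l ∈ Icc 1 L, M / 2 ^ (l - 1) * ∑ i, (#(dyadicLayer w M l ∩ Q i) : K) := by
        rw [sum_comm]
        simp only [mul_sum]
    _ ≤ ∑ l ∈ Icc 1 L, M / 2 ^ (l - 1) * (c * ∑ j ∈ Icc 1 l, (#(dyadicLayer w M j) : K)) := by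
        gcongr with l hl
        exact hsparse l hl
    _ = c * ∑ l ∈ Icc 1 L, M / 2 ^ (l - 1) * ∑ j ∈ Icc 1 l, (#(dyadicLayer w M j) : K) := by
        simp only [mul_sum, mul_left_comm c]
    _ ≤ c * (4 * ∑ v, w v) := by
        gcongr
        exact sum_mul_sum_card_dyadicLayer_le hM hw
    _ = 4 * c * ∑ v, w v := by ring

end DyadicLayer

theorem degree_eq_zero_or_mem_Ico {V K : Type*} [Fintype V] [Field K] [LinearOrder K]
    [IsStrictOrderedRing K] (F : SimpleGraph V) [DecidableRel F.Adj] {L : ℕ}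
    (hL : Fintype.card V ≤ 2 ^ L) (v : V) :
    (F.degree v : K) = 0 ∨
      (F.degree v : K) ∈ Set.Ico ((Fintype.card V : K) / 2 ^ L) (Fintype.card V) := by
  refine (F.degree v).eq_zero_or_pos.imp (by simp) fun hpos => ⟨?_, ?_⟩
  · calc (Fintype.card V : K) / 2 ^ L ≤ 1 :=
          div_le_one_of_le₀ (by exact_mod_cast hL) (by positivity)
      _ ≤ F.degree v := by exact_mod_cast hpos
  · exact_mod_cast F.degree_lt_card_verts v

theorem bottleneck_event (V : Type*) [Fintype V] [DecidableEq V]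
    (F : SimpleGraph V) [DecidableRel F.Adj]
    (k t r : ℕ) (ε δ : ℝ)
    (hk : 2 ≤ k) (ht : 1 ≤ t) (hr : 1 ≤ r)
    (hε : 0 < ε) (hδ0 : 0 < δ) (hδ : δ < 1 / 16)
    (hV : Fintype.card V = k) (hE : F.edgeFinset.card = t)
    (Q : Fin r → Finset V)
    (L : ℕ) (hL : L = ⌈Real.logb 2 (k : ℝ)⌉₊)
    (A : ℕ → Finset V)
    (hA : ∀ j, A j = Finset.univ.filter fun v =>
        (k : ℝ) / 2 ^ j ≤ (F.degree v : ℝ) ∧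
          (F.degree v : ℝ) < (k : ℝ) / 2 ^ (j - 1))
    (hX : ε * r * t / 2 ≤ ∑ i : Fin r, ∑ v ∈ Q i, (F.degree v : ℝ)) :
    ∃ ℓ ∈ Finset.Icc 1 L,
      δ * ε * r * (∑ j ∈ Finset.Icc 1 ℓ, ((A j).card : ℝ)) <
        ∑ i : Fin r, (((A ℓ) ∩ Q i).card : ℝ) := by
  obtain rfl : A = dyadicLayer (fun v => (F.degree v : ℝ)) k := funext fun j => by
    rw [hA, dyadicLayer]
  have hkL : Fintype.card V ≤ 2 ^ L := by
    have hclog : L = Nat.clog 2 k := by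
      rw [hL]
      exact_mod_cast Real.natCeil_logb_natCast 2 k
    rw [hV, hclog]
    exact Nat.le_pow_clog one_lt_two k
  have hdeg : ∑ v, (F.degree v : ℝ) = 2 * t := by
    exact_mod_cast hE ▸ F.sum_degrees_eq_twice_card_edges
  refine bottleneck_event_general k.cast_nonneg (hV ▸ degree_eq_zero_or_mem_Ico F hkL) Q
    (by positivity) (lt_of_lt_of_le ?_ hX)
  have hpos : 0 < ε * r * t := by positivity
  rw [hdeg]
  linarith [mul_lt_mul_of_pos_right hδ hpos]
end

section
/- For every real δ with 0 < δ ≤ 2 there exists a constant c > 0 such that the following holds for all integers r > s ≥ 1 and k ≥ 2 with (k − 1)·(r − s) ≥ (1 + δ)·r. For every integer n ≥ 1 with n ≤ exp(c·(r − s)), there exist functions φ_1, …, φ_r : {1,…,n} → {1,…,k−1} such that for every pair of distinct u, v ∈ {1,…,n}, the number of indices i ∈ {1,…,r} with φ_i(u) ≠ φ_i(v) is at least s. -/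
/-! Choosing values of `φ` along a vertex `u` gives a word `i ↦ φ i u`, and the requirement is
that the words of distinct vertices have Hamming distance at least `s`. Write `r` and `q` for the
length of the words and the size of the alphabet. A uniformly random word agrees with a fixed one
in `r / q` coordinates on average, so it lies at distance less than `s` only if it has more than
`r - s` agreements, at least `1 + δ` times the mean; by Chernoff's bound a Hamming ball holds at
most a fraction `exp (-c * (r - s))` of all words, where `c = chernoffRate δ`. The exponential
moment behind it is the sum of `t ^ hammingDist x y` over `y`, which factors over the coordinates,
at `t = (1 + δ)⁻¹`. The balls around a maximal code cover all words (Gilbert–Varshamov), hence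
such a code has at least `exp (c * (r - s))` words. -/

open Finset Real

theorem exists_pairwise_not_and_card_le_sum {α : Type*} [Fintype α] (R : α → α → Prop)
    [DecidableRel R] [Std.Refl R] [Std.Symm R] :
    ∃ A : Finset α, (A : Set α).Pairwise (fun x y ↦ ¬ R x y) ∧
      Fintype.card α ≤ ∑ x ∈ A, #{y | R x y} := by
  classical
  have : Std.Symm fun x y ↦ ¬ R x y := ⟨fun _ _ h h' ↦ h (symm_of R h')⟩
  obtain ⟨A, hA⟩ := Set.toFinite {A : Finset α | (A : Set α).Pairwise fun x y ↦ ¬ R x y}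
    |>.exists_maximal ⟨∅, by simp⟩
  have hcover : (A.biUnion fun x ↦ ({y | R x y} : Finset α)) = univ := by
    refine eq_univ_of_forall fun y ↦ ?_
    by_contra hy
    have hyA : ∀ x ∈ A, ¬ R x y := by simpa using hy
    have hinsert : ((insert y A : Finset α) : Set α).Pairwise fun x y ↦ ¬ R x y := by
      rw [coe_insert]
      exact hA.prop.insert_of_symm fun x hx _ h ↦ hyA x hx (symm_of R h)
    exact hyA y (hA.le_of_ge hinsert (subset_insert y A) (mem_insert_self y A)) (refl_of R y)
  refine ⟨A, hA.prop, ?_⟩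
  calc Fintype.card α = #(A.biUnion fun x ↦ {y | R x y}) := by rw [hcover, card_univ]
    _ ≤ ∑ x ∈ A, #{y | R x y} := card_biUnion_le

section HammingBall

variable {ι : Type*} [Fintype ι] {β : ι → Type*} [∀ i, DecidableEq (β i)]

theorem pow_hammingDist {M : Type*} [CommMonoid M] (t : M) (x y : ∀ i, β i) :
    t ^ hammingDist x y = ∏ i, if x i = y i then 1 else t := by
  simp [hammingDist, prod_ite]

variable [∀ i, Fintype (β i)]

theorem exists_pairwise_le_hammingDist_and_card_le_sum [DecidableEq ι] {s : ℕ} (hs : 0 < s) :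
    ∃ C : Finset (∀ i, β i), (C : Set (∀ i, β i)).Pairwise (fun x y ↦ s ≤ hammingDist x y) ∧
      Fintype.card (∀ i, β i) ≤ ∑ x ∈ C, #{y | hammingDist x y < s} := by
  have : Std.Refl fun x y : ∀ i, β i ↦ hammingDist x y < s := ⟨fun x ↦ by simpa⟩
  have : Std.Symm fun x y : ∀ i, β i ↦ hammingDist x y < s :=
    ⟨fun x y h ↦ by rwa [hammingDist_comm]⟩
  simpa only [not_lt] using
    exists_pairwise_not_and_card_le_sum fun x y : ∀ i, β i ↦ hammingDist x y < s

theorem sum_pow_hammingDist [DecidableEq ι] {S : Type*} [CommRing S] (t : S) (x : ∀ i, β i) :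
    ∑ y, t ^ hammingDist x y = ∏ i, (1 + (Fintype.card (β i) - 1) * t) := by
  have hcoord (i : ι) : ∑ b, (if x i = b then 1 else t) = 1 + (Fintype.card (β i) - 1) * t := by
    have hsplit (b : β i) : (if x i = b then 1 else t) = t + if x i = b then 1 - t else 0 := by
      split_ifs <;> ring
    simp_rw [hsplit, sum_add_distrib, sum_const, sum_ite_eq, mem_univ, if_true, nsmul_eq_mul,
      card_univ]
    ring
  simp_rw [pow_hammingDist, ← hcoord]
  exact (Fintype.prod_sum fun i b ↦ if x i = b then (1 : S) else t).symm

theorem card_hammingDist_lt_mul_pow_le [DecidableEq ι] {K : Type*} [CommRing K] [PartialOrder K]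
    [IsOrderedRing K] {t : K} (ht₀ : 0 ≤ t) (ht₁ : t ≤ 1) (s : ℕ) (x : ∀ i, β i) :
    #{y | hammingDist x y < s} * t ^ s ≤ ∏ i, (1 + (Fintype.card (β i) - 1) * t) := by
  calc (#{y | hammingDist x y < s} : K) * t ^ s
      = ∑ y with hammingDist x y < s, t ^ s := by rw [sum_const, nsmul_eq_mul]
    _ ≤ ∑ y with hammingDist x y < s, t ^ hammingDist x y :=
        sum_le_sum fun y hy ↦ pow_le_pow_of_le_one ht₀ ht₁ (mem_filter.1 hy).2.le
    _ ≤ ∑ y, t ^ hammingDist x y :=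
        sum_le_univ_sum_of_nonneg fun y ↦ pow_nonneg ht₀ _
    _ = ∏ i, (1 + (Fintype.card (β i) - 1) * t) := sum_pow_hammingDist t x

end HammingBall

/-- The exponent of the Chernoff bound: the probability that a binomial variable of mean at most
`a / (1 + δ)` reaches `a` is at most `exp (-(chernoffRate δ * a))`. -/
noncomputable def chernoffRate (δ : ℝ) : ℝ := log (1 + δ) - δ / (1 + δ)

theorem chernoffRate_pos {δ : ℝ} (hδ : 0 < δ) : 0 < chernoffRate δ := by
  have hinv : (1 + δ)⁻¹ ≠ 1 := by simpa using hδ.ne'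
  have hlog := log_lt_sub_one_of_pos (by positivity) hinv
  have hdiv : δ / (1 + δ) = 1 - (1 + δ)⁻¹ := by field_simp; ring
  rw [log_inv] at hlog
  rw [chernoffRate, hdiv]
  linarith

theorem one_add_sub_one_mul_inv_le {q δ : ℝ} (hq : 0 < q) (hδ : 0 < 1 + δ) :
    1 + (q - 1) * (1 + δ)⁻¹ ≤ q * exp (δ / q - log (1 + δ)) := by
  calc 1 + (q - 1) * (1 + δ)⁻¹ = q * ((δ / q + 1) / (1 + δ)) := by field_simp; ring
    _ ≤ q * (exp (δ / q) / (1 + δ)) := by gcongr; exact add_one_le_exp _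
    _ = q * exp (δ / q - log (1 + δ)) := by rw [exp_sub, exp_log hδ]

section Words

variable {ι α : Type*} [Fintype ι] [Fintype α] [DecidableEq α] [Nonempty α]
  {δ : ℝ} {s : ℕ}

theorem card_hammingDist_lt_le [DecidableEq ι] (hδ : 0 ≤ δ)
    (h : (1 + δ) * Fintype.card ι ≤ Fintype.card α * (Fintype.card ι - s : ℝ)) (x : ι → α) :
    (#{y | hammingDist x y < s} : ℝ) ≤
      Fintype.card α ^ Fintype.card ι * exp (-(chernoffRate δ * (Fintype.card ι - s))) := by
  set r : ℝ := (Fintype.card ι : ℝ)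
  set q : ℝ := (Fintype.card α : ℝ) with hq
  have hq₀ : 0 < q := by rw [hq]; exact_mod_cast Fintype.card_pos
  have hδ₁ : 0 < 1 + δ := by linarith
  have hpow : (1 + δ)⁻¹ ^ s = exp (-(s * log (1 + δ))) := by
    rw [← mul_neg, exp_nat_mul, exp_neg, exp_log hδ₁]
  have hbase : 0 ≤ 1 + (q - 1) * (1 + δ)⁻¹ := by
    have : 1 + (q - 1) * (1 + δ)⁻¹ = (q + δ) / (1 + δ) := by field_simp; ring
    rw [this]; positivity
  have hmoment : #{y | hammingDist x y < s} * exp (-(s * log (1 + δ))) ≤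
      q ^ Fintype.card ι * exp (r * (δ / q - log (1 + δ))) := by
    calc #{y | hammingDist x y < s} * exp (-(s * log (1 + δ)))
        ≤ (1 + (q - 1) * (1 + δ)⁻¹) ^ Fintype.card ι := by
          simpa [hpow] using card_hammingDist_lt_mul_pow_le (inv_nonneg.2 hδ₁.le)
            (inv_le_one_of_one_le₀ (by linarith)) s x
      _ ≤ (q * exp (δ / q - log (1 + δ))) ^ Fintype.card ι := by
          gcongr; exact one_add_sub_one_mul_inv_le hq₀ hδ₁
      _ = q ^ Fintype.card ι * exp (r * (δ / q - log (1 + δ))) := by rw [mul_pow, exp_nat_mul]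
  have hmean : r * (δ / q) ≤ δ / (1 + δ) * (r - s) := by
    rw [← mul_div_assoc, div_mul_eq_mul_div, div_le_div_iff₀ hq₀ hδ₁]
    linear_combination δ * h
  rw [exp_neg, ← div_eq_mul_inv, div_le_iff₀ (exp_pos _)] at hmoment
  refine hmoment.trans ?_
  rw [mul_assoc, ← exp_add]
  gcongr
  rw [chernoffRate]
  linear_combination hmean

theorem exists_pairwise_le_hammingDist_and_exp_le_card (hδ : 0 ≤ δ) (hs : 0 < s)
    (h : (1 + δ) * Fintype.card ι ≤ Fintype.card α * (Fintype.card ι - s : ℝ)) :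
    ∃ C : Finset (ι → α), (C : Set (ι → α)).Pairwise (fun x y ↦ s ≤ hammingDist x y) ∧
      exp (chernoffRate δ * (Fintype.card ι - s)) ≤ #C := by
  classical
  obtain ⟨C, hC, hcover⟩ :=
    exists_pairwise_le_hammingDist_and_card_le_sum (β := fun _ : ι ↦ α) hs
  refine ⟨C, hC, ?_⟩
  set E := chernoffRate δ * (Fintype.card ι - s)
  set N : ℝ := (Fintype.card α : ℝ) ^ Fintype.card ι
  have hN : 0 < N := by positivity
  have hwords : N * 1 ≤ N * (#C / exp E) := by
    calc N * 1 = Fintype.card (ι → α) := by rw [Fintype.card_fun, Nat.cast_pow, mul_one]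
      _ ≤ ∑ x ∈ C, (#{y | hammingDist x y < s} : ℝ) := by exact_mod_cast hcover
      _ ≤ ∑ _x ∈ C, N * exp (-E) := sum_le_sum fun x _ ↦ card_hammingDist_lt_le hδ h x
      _ = N * (#C / exp E) := by rw [sum_const, nsmul_eq_mul, exp_neg]; ring
  exact (one_le_div (exp_pos E)).1 (le_of_mul_le_mul_left hwords hN)

theorem exists_separating_functions_near_turan_general {V : Type*} [Fintype V] (hδ : 0 ≤ δ)
    (hs : 0 < s) (h : (1 + δ) * Fintype.card ι ≤ Fintype.card α * (Fintype.card ι - s : ℝ))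
    (hV : Fintype.card V ≤ exp (chernoffRate δ * (Fintype.card ι - s))) :
    ∃ φ : ι → V → α, ∀ u v, u ≠ v → s ≤ #{i | φ i u ≠ φ i v} := by
  obtain ⟨C, hC, hcard⟩ := exists_pairwise_le_hammingDist_and_exp_le_card hδ hs h
  obtain ⟨f⟩ : Nonempty (V ↪ C) := Function.Embedding.nonempty_of_card_le <| by
    rw [Fintype.card_coe]; exact_mod_cast hV.trans hcard
  exact ⟨fun i u ↦ (f u).1 i, fun u v huv ↦ hC (f u).2 (f v).2 <|
    Subtype.coe_injective.ne (f.injective.ne huv)⟩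

end Words

theorem exists_separating_functions_near_turan (δ : ℝ) (hδ0 : 0 < δ)
    (hδ2 : δ ≤ 2) :
    ∃ c > (0 : ℝ), ∀ r s k n : ℕ, s < r → 1 ≤ s → 2 ≤ k →
      ((k : ℝ) - 1) * ((r : ℝ) - s) ≥ (1 + δ) * r →
      1 ≤ n → (n : ℝ) ≤ Real.exp (c * ((r : ℝ) - s)) →
      ∃ φ : Fin r → Fin n → Fin (k - 1),
        ∀ u v : Fin n, u ≠ v →
          s ≤ (Finset.univ.filter fun i : Fin r => φ i u ≠ φ i v).card := by
  refine ⟨chernoffRate δ, chernoffRate_pos hδ0, fun r s k n _ hs hk hkr _ hn ↦ ?_⟩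
  have : NeZero (k - 1) := ⟨by omega⟩
  exact exists_separating_functions_near_turan_general hδ0.le hs
    (by simpa [Nat.cast_pred (by omega : 0 < k)] using hkr) (by simpa using hn)
end

section
/- Let m ≥ 1, a ≥ 1 and r ≥ 1 be integers and let 0 ≤ q ≤ a·r. The number of r-tuples (x^{(1)}, …, x^{(r)}) of sequences x^{(i)} : {1,…,a} → {1,…,m} such that |{(j, i) ∈ {1,…,a} × {1,…,r} : there exists j' < j with x^{(i)}(j') = x^{(i)}(j)}| ≥ q is at most C(a·r, q) · a^q · m^{a·r − q}, where C(a·r, q) denotes the binomial coefficient. -/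
/-!
Reveal the values in an order compatible with "earlier than". Fix the set `T` of positions that are
to be repeats and, for each position of `T`, the earlier position whose value it repeats: then
the values outside `T` determine everything. Counting the choices of the earlier positions and of
the values outside `T`, and taking a union bound over the sets `T` of size `q`, gives the estimate.
-/

open Finset

section WellFoundedRelation

variable {P α : Type*} {r : P → P → Prop}

/-- The value of `x` at the position `p` already occurs at an `r`-earlier position. The relation `r`
is arbitrary so that a tuple of sequences can be treated as a single family, in which only
positions in the same sequence are comparable. -/
def IsRepeat (r : P → P → Prop) (x : P → α) (p : P) : Prop :=
  ∃ p', r p' p ∧ x p' = x p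

instance IsRepeat.decidable [Fintype P] [DecidableRel r] [DecidableEq α] (x : P → α) (p : P) :
    Decidable (IsRepeat r x p) :=
  inferInstanceAs (Decidable (∃ p', r p' p ∧ x p' = x p))

theorem eq_of_apply_predecessor_eq (hr : WellFounded r) {T : Set P} {g : ∀ p ∈ T, P}
    (hg : ∀ p hp, r (g p hp) p) {x y : P → α} (hx : ∀ p hp, x (g p hp) = x p)
    (hy : ∀ p hp, y (g p hp) = y p) (hxy : ∀ p ∉ T, x p = y p) : x = y := by
  funext p
  induction p using hr.induction with
  | _ p ih =>
    by_cases hp : p ∈ T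
    · rw [← hx p hp, ← hy p hp, ih _ (hg p hp)]
    · exact hxy p hp

variable [Fintype P] [Fintype α] [DecidableEq P] [DecidableEq α]

theorem card_filter_apply_predecessor_eq_le (hr : WellFounded r) {T : Finset P} {g : ∀ p ∈ T, P}
    (hg : ∀ p hp, r (g p hp) p) :
    #{x : P → α | ∀ p hp, x (g p hp) = x p} ≤ Fintype.card α ^ (Fintype.card P - #T) := by
  have restrict_injOn : Set.InjOn (fun (x : P → α) (p : {p // p ∉ T}) ↦ x p)
      ({x : P → α | ∀ p hp, x (g p hp) = x p} : Finset (P → α)) := by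
    intro x hx y hy hxy
    exact eq_of_apply_predecessor_eq (T := T) hr hg ((mem_filter_univ x).1 hx)
      ((mem_filter_univ y).1 hy) fun p hp ↦ congrFun hxy ⟨p, hp⟩
  calc #{x : P → α | ∀ p hp, x (g p hp) = x p}
      ≤ Fintype.card ({p // p ∉ T} → α) :=
        card_le_card_of_injOn _ (fun _ _ ↦ mem_univ _) restrict_injOn
    _ = Fintype.card α ^ (Fintype.card P - #T) := by
      rw [Fintype.card_fun, Fintype.card_subtype_compl, Fintype.card_coe]

variable [DecidableRel r]

theorem card_filter_forall_isRepeat_le (hr : WellFounded r) (T : Finset P) :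
    #{x : P → α | ∀ p ∈ T, IsRepeat r x p} ≤
      (∏ p ∈ T, #{p' | r p' p}) * Fintype.card α ^ (Fintype.card P - #T) := by
  have subset_biUnion : ({x | ∀ p ∈ T, IsRepeat r x p} : Finset (P → α)) ⊆
      (T.pi fun p ↦ {p' | r p' p}).biUnion fun g ↦ {x | ∀ p hp, x (g p hp) = x p} := by
    intro x hx
    choose g hg hxg using (mem_filter_univ x).1 hx
    exact mem_biUnion.2 ⟨g, mem_pi.2 fun p hp ↦ (mem_filter_univ _).2 (hg p hp),
      (mem_filter_univ x).2 hxg⟩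
  rw [← card_pi]
  refine (card_le_card subset_biUnion).trans (card_biUnion_le_card_mul _ _ _ fun g hg ↦ ?_)
  exact card_filter_apply_predecessor_eq_le hr fun p hp ↦ (mem_filter.1 (mem_pi.1 hg p hp)).2

theorem card_filter_le_card_isRepeat_le (hr : WellFounded r) {b : ℕ}
    (hb : ∀ p, #{p' | r p' p} ≤ b) (q : ℕ) :
    #{x : P → α | q ≤ #{p | IsRepeat r x p}} ≤
      (Fintype.card P).choose q * b ^ q * Fintype.card α ^ (Fintype.card P - q) := by
  have subset_biUnion : ({x | q ≤ #{p | IsRepeat r x p}} : Finset (P → α)) ⊆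
      (powersetCard q univ).biUnion fun T ↦ {x | ∀ p ∈ T, IsRepeat r x p} := by
    intro x hx
    obtain ⟨T, hT, hTq⟩ := exists_subset_card_eq ((mem_filter_univ x).1 hx)
    exact mem_biUnion.2 ⟨T, mem_powersetCard.2 ⟨subset_univ T, hTq⟩,
      (mem_filter_univ x).2 fun p hp ↦ (mem_filter_univ p).1 (hT hp)⟩
  rw [mul_assoc, ← card_univ (α := P), ← card_powersetCard q (univ : Finset P)]
  refine (card_le_card subset_biUnion).trans (card_biUnion_le_card_mul _ _ _ fun T hT ↦ ?_)
  obtain rfl : #T = q := (mem_powersetCard.1 hT).2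
  calc #{x : P → α | ∀ p ∈ T, IsRepeat r x p}
      ≤ (∏ p ∈ T, #{p' | r p' p}) * Fintype.card α ^ (Fintype.card P - #T) :=
        card_filter_forall_isRepeat_le hr T
    _ ≤ b ^ #T * Fintype.card α ^ (Fintype.card P - #T) := by
      gcongr
      exact prod_le_pow_card _ _ _ fun p _ ↦ hb p

end WellFoundedRelation

section SequenceOrder

variable {I J α : Type*}

/-- The order in which the values of a family of `J`-indexed sequences are revealed: `(j', i')`
comes before `(j, i)` if it belongs to the same sequence, `i' = i`, and `j' < j`. -/
def PrecedesInSequence [LT J] (p' p : J × I) : Prop :=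
  p'.1 < p.1 ∧ p'.2 = p.2

instance PrecedesInSequence.decidableRel [LT J] [DecidableLT J] [DecidableEq I] :
    DecidableRel (PrecedesInSequence : J × I → J × I → Prop) :=
  fun p' p ↦ inferInstanceAs (Decidable (p'.1 < p.1 ∧ p'.2 = p.2))

theorem PrecedesInSequence.wellFounded [LT J] [WellFoundedLT J] :
    WellFounded (PrecedesInSequence : J × I → J × I → Prop) :=
  Subrelation.wf And.left (InvImage.wf Prod.fst wellFounded_lt)

theorem PrecedesInSequence.card_filter_le [LT J] [DecidableLT J] [Fintype I] [Fintype J]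
    [DecidableEq I] (p : J × I) : #{p' | PrecedesInSequence p' p} ≤ Fintype.card J :=
  card_le_card_of_injOn Prod.fst (fun _ _ ↦ mem_univ _) fun _ hu _ hv huv ↦
    Prod.ext huv (((mem_filter_univ _).1 hu).2.trans ((mem_filter_univ _).1 hv).2.symm)

theorem isRepeat_precedesInSequence_iff [LT J] {x : I → J → α} {p : J × I} :
    IsRepeat PrecedesInSequence (fun p : J × I ↦ x p.2 p.1) p ↔
      IsRepeat (· < ·) (x p.2) p.1 := by
  constructor
  · rintro ⟨⟨j', i⟩, ⟨hlt, rfl⟩, heq⟩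
    exact ⟨j', hlt, heq⟩
  · rintro ⟨j', hlt, heq⟩
    exact ⟨(j', p.2), ⟨hlt, rfl⟩, heq⟩

variable [Fintype I] [Fintype J] [Fintype α] [DecidableEq I] [DecidableEq J] [DecidableEq α]

theorem count_tuples_with_many_repeats_general [Preorder J] [DecidableLT J] (q : ℕ) :
    #{x : I → J → α | q ≤ #{p : J × I | IsRepeat (· < ·) (x p.2) p.1}} ≤
      (Fintype.card J * Fintype.card I).choose q * Fintype.card J ^ q *
        Fintype.card α ^ (Fintype.card J * Fintype.card I - q) := by
  have uncurry_injective : Function.Injective fun (x : I → J → α) (p : J × I) ↦ x p.2 p.1 :=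
    fun x y hxy ↦ funext₂ fun i j ↦ congrFun hxy (j, i)
  calc #{x : I → J → α | q ≤ #{p : J × I | IsRepeat (· < ·) (x p.2) p.1}}
      ≤ #{x : J × I → α | q ≤ #{p | IsRepeat PrecedesInSequence x p}} :=
        card_le_card_of_injOn _ (fun x hx ↦ by simpa [isRepeat_precedesInSequence_iff] using hx)
          uncurry_injective.injOn
    _ ≤ _ := by
      rw [← Fintype.card_prod]
      exact card_filter_le_card_isRepeat_le PrecedesInSequence.wellFounded
        PrecedesInSequence.card_filter_le q

end SequenceOrder

theorem count_tuples_with_many_repeats (m a r q : ℕ)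
    (hm : 1 ≤ m) (ha : 1 ≤ a) (hr : 1 ≤ r) (hq : q ≤ a * r) :
    (Finset.univ.filter fun x : Fin r → Fin a → Fin m =>
        q ≤ (Finset.univ.filter fun ji : Fin a × Fin r =>
              ∃ j' : Fin a, j' < ji.1 ∧ x ji.2 j' = x ji.2 ji.1).card).card
      ≤ Nat.choose (a * r) q * a ^ q * m ^ (a * r - q) := by
  convert count_tuples_with_many_repeats_general (I := Fin r) (J := Fin a) (α := Fin m) q <;>
    simp [IsRepeat]
end
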